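/- For every integer k ≥ 2 there exists a numerical semigroup S such that Δ_0(S) = {1, 2, …, k − 1}. In particular, 0-delta sets of numerical semigroups can be arbitrarily long intervals. -/

import Mathlib

open Finset

/-- `Zfac a x`: the set of factorizations of `x` with respect to the generators `a`. -/
def Zfac {k : ℕ} (a : Fin k → ℕ) (x : ℕ) : Set (Fin k → ℕ) :=
  {z | ∑ j, z j * a j = x}

/-- The `∞`-length of a factorization: the maximum coordinate. -/
def linf {k : ℕ} (z : Fin k → ℕ) : ℕ :=
  Finset.univ.sup z

/-- The `0`-length of a factorization: the size of its support. -/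
def lzero {k : ℕ} (z : Fin k → ℕ) : ℕ :=
  (Finset.univ.filter fun i => z i ≠ 0).card

/-- `𝓛∞(x)`: the set of `∞`-lengths of factorizations of `x`. -/
def LinfSet {k : ℕ} (a : Fin k → ℕ) (x : ℕ) : Set ℕ :=
  linf '' Zfac a x

/-- `𝓛∞(x, i)`: `∞`-lengths of factorizations whose maximum coordinate is attained at `i`. -/
def LinfSetI {k : ℕ} (a : Fin k → ℕ) (x : ℕ) (i : Fin k) : Set ℕ :=
  linf '' {z | z ∈ Zfac a x ∧ z i = linf z}

/-- `𝓛₀(x)`: the set of `0`-lengths of factorizations of `x`. -/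
def LzeroSet {k : ℕ} (a : Fin k → ℕ) (x : ℕ) : Set ℕ :=
  lzero '' Zfac a x

/-- The set of differences between consecutive elements of a set `T ⊆ ℕ`. -/
def deltaSet (T : Set ℕ) : Set ℕ :=
  {d | ∃ u ∈ T, ∃ v ∈ T, u < v ∧ v - u = d ∧ ∀ t ∈ T, ¬(u < t ∧ t < v)}

/-- `Δ∞(x)`. -/
def DeltaInf {k : ℕ} (a : Fin k → ℕ) (x : ℕ) : Set ℕ := deltaSet (LinfSet a x)

/-- `Δ∞(S) = ⋃ x ∈ S, Δ∞(x)` (for `x ∉ S` the contribution is empty). -/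
def DeltaInfS {k : ℕ} (a : Fin k → ℕ) : Set ℕ := ⋃ x : ℕ, DeltaInf a x

/-- `Δ₀(x)`. -/
def DeltaZero {k : ℕ} (a : Fin k → ℕ) (x : ℕ) : Set ℕ := deltaSet (LzeroSet a x)

/-- `Δ₀(S) = ⋃ x ∈ S, Δ₀(x)` (for `x ∉ S` the contribution is empty). -/
def DeltaZeroS {k : ℕ} (a : Fin k → ℕ) : Set ℕ := ⋃ x : ℕ, DeltaZero a x

/-- `a` is a system of minimal generators: no generator is a `ℕ`-combination of the others. -/
def MinimalGens {k : ℕ} (a : Fin k → ℕ) : Prop :=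
  ∀ i : Fin k, ¬ ∃ z : Fin k → ℕ, z i = 0 ∧ ∑ j, z j * a j = a i

/-! With `p = 2 ∑ B ^ i`, the generators `p` and `p + B ^ i` (`i < m`) are distinct and lie in
`[p, 2p)`, so they are minimal, and they satisfy the relation `(2m + 1) p = 2 ∑ (p + B ^ i)`. When
`B` is large, uniqueness of base-`B` digits makes this the only relation visible to small elements.
For `T` a set of `i`'s, `(2m + 2) p + ∑ i ∈ T, (p + B ^ i)` therefore has exactly two
factorizations: the given one, of `0`-length `#T + 1`, and the one obtained by applying the relation
once, of full support. Letting `#T` run through `0, …, m - 1` yields all differences `1, …, m`, and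
no larger difference fits since there are `m + 1` generators. -/

section Generators

variable {n : ℕ} {a : Fin n → ℕ}

theorem minimalGens_of_lt_two_mul (hinj : Function.Injective a) (hlt : ∀ i j, a i < 2 * a j) :
    MinimalGens a := by
  rintro i ⟨z, hzi, hsum⟩
  have hpos : 0 < a i := by have := hlt i i; lia
  obtain ⟨j, -, hj⟩ := exists_ne_zero_of_sum_ne_zero (hsum ▸ hpos.ne')
  have hzj : 0 < z j := Nat.pos_of_ne_zero (left_ne_zero_of_mul hj)
  have hcoeff : ∑ l, z l < 2 := by
    refine lt_of_mul_lt_mul_right (a := a i) ?_ hpos.le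
    calc (∑ l, z l) * a i = ∑ l, z l * a i := sum_mul ..
      _ < ∑ l, z l * (2 * a l) :=
          sum_lt_sum (fun l _ => Nat.mul_le_mul_left _ (hlt i l).le)
            ⟨j, mem_univ j, Nat.mul_lt_mul_of_pos_left (hlt i j) hzj⟩
      _ = 2 * a i := by rw [← hsum, mul_sum]; exact sum_congr rfl fun l _ => by ring
  have hz_one : z j = 1 := by
    have := single_le_sum_of_canonicallyOrdered (f := z) (mem_univ j)
    lia
  have hz_zero : ∀ l ≠ j, z l = 0 := fun l hl => by
    have := add_le_sum (f := z) (fun _ _ => Nat.zero_le _) (mem_univ l) (mem_univ j) hl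
    lia
  have haj : a j = a i := by
    rw [← hsum, Fintype.sum_eq_single j fun l hl => by rw [hz_zero l hl, zero_mul], hz_one, one_mul]
  rw [hinj haj, hzi] at hz_one
  exact zero_ne_one hz_one

theorem gcd_eq_one_of_eq_add_one {i j : Fin n} (h : a j = a i + 1) : univ.gcd a = 1 := by
  have hj : univ.gcd a ∣ a i + 1 := h ▸ gcd_dvd (mem_univ j)
  exact Nat.dvd_one.mp ((Nat.dvd_add_right (gcd_dvd (mem_univ i))).mp hj)

theorem Zfac_zero (ha : ∀ i, 0 < a i) : Zfac a 0 = {0} := by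
  ext z
  simp [Zfac, sum_eq_zero_iff, funext_iff, (ha _).ne']

end Generators

section ZeroLength

variable {n : ℕ}

theorem lzero_le (z : Fin n → ℕ) : lzero z ≤ n :=
  card_finset_fin_le _

theorem lzero_eq_zero_iff {z : Fin n → ℕ} : lzero z = 0 ↔ z = 0 := by
  simp [lzero, filter_eq_empty_iff, funext_iff]

theorem lzero_eq_of_forall_ne_zero {z : Fin n → ℕ} (hz : ∀ i, z i ≠ 0) : lzero z = n := by
  simp [lzero, hz]

theorem lzero_cons_of_ne_zero {c : ℕ} (hc : c ≠ 0) (z : Fin n → ℕ) :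
    lzero (Fin.cons c z : Fin (n + 1) → ℕ) = lzero z + 1 := by
  simp [lzero, Fin.univ_succ, filter_insert, hc, filter_map]

theorem sub_mem_deltaSet_pair {u v : ℕ} (h : u < v) : v - u ∈ deltaSet {u, v} :=
  ⟨u, by simp, v, by simp, h, rfl, by rintro t (rfl | rfl) <;> lia⟩

theorem DeltaZeroS_subset_Icc {a : Fin n → ℕ} (ha : ∀ i, 0 < a i) :
    DeltaZeroS a ⊆ Set.Icc 1 (n - 1) := by
  refine Set.iUnion_subset fun x => ?_
  rintro _ ⟨_, ⟨z, hz, rfl⟩, _, ⟨w, hw, rfl⟩, hlt, rfl, -⟩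
  have hz_ne : lzero z ≠ 0 := fun h => by
    obtain rfl := lzero_eq_zero_iff.mp h
    obtain rfl : x = 0 := by simpa [Zfac] using hz.symm
    rw [Zfac_zero ha] at hw
    exact hlt.ne' (congrArg lzero hw)
  have := lzero_le w
  constructor <;> lia

end ZeroLength

theorem eq_of_sum_mul_pow_eq {m B : ℕ} {u v : Fin m → ℕ} (hu : ∀ i, u i < B) (hv : ∀ i, v i < B)
    (h : ∑ i, u i * B ^ (i : ℕ) = ∑ i, v i * B ^ (i : ℕ)) : u = v := by
  have hdigits : (fun i => ⟨u i, hu i⟩ : Fin m → Fin B) = fun i => ⟨v i, hv i⟩ :=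
    finFunctionFinEquiv.injective (Fin.ext (by simpa only [finFunctionFinEquiv_apply] using h))
  exact funext fun i => congrArg Fin.val (congrFun hdigits i)

/-- The smallest generator `p = 2 (1 + B + ⋯ + B ^ (m - 1))` of the semigroup `⟨powerGens m B⟩`. -/
def leastGen (m B : ℕ) : ℕ := 2 * ∑ i : Fin m, B ^ (i : ℕ)

/-- The generators `p, p + 1, p + B, …, p + B ^ (m - 1)`, where `p = leastGen m B`. The factor `2`
in `p` serves to include `m = 1`, where they are `2, 3`. -/
def powerGens (m B : ℕ) : Fin (m + 1) → ℕ :=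
  Fin.cons (leastGen m B) fun i => leastGen m B + B ^ (i : ℕ)

section PowerGens

variable {m B : ℕ}

theorem pow_lt_leastGen (hB : 0 < B) (i : Fin m) : B ^ (i : ℕ) < leastGen m B := by
  have hle : B ^ (i : ℕ) ≤ ∑ j : Fin m, B ^ (j : ℕ) :=
    single_le_sum_of_canonicallyOrdered (f := fun j : Fin m => B ^ (j : ℕ)) (mem_univ i)
  have hpos : 0 < B ^ (i : ℕ) := Nat.pow_pos hB
  unfold leastGen
  lia

theorem leastGen_pos (hm : 0 < m) (hB : 0 < B) : 0 < leastGen m B :=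
  (Nat.zero_le _).trans_lt (pow_lt_leastGen hB ⟨0, hm⟩)

theorem leastGen_le_powerGens (j : Fin (m + 1)) : leastGen m B ≤ powerGens m B j := by
  cases j using Fin.cases <;> simp [powerGens]

theorem powerGens_lt_two_mul_leastGen (hm : 0 < m) (hB : 0 < B) (j : Fin (m + 1)) :
    powerGens m B j < 2 * leastGen m B := by
  cases j using Fin.cases with
  | zero => have := leastGen_pos hm hB; simp only [powerGens, Fin.cons_zero]; lia
  | succ i => have := pow_lt_leastGen hB i; simp only [powerGens, Fin.cons_succ]; lia

theorem powerGens_injective (hB : 2 ≤ B) : Function.Injective (powerGens m B) := by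
  refine Fin.cons_injective_iff.mpr ⟨?_, fun i j hij => ?_⟩
  · rintro ⟨i, hi⟩
    have : 0 < B ^ (i : ℕ) := by positivity
    lia
  · exact Fin.ext (Nat.pow_right_injective hB (Nat.add_left_cancel hij))

theorem gcd_powerGens (hm : 0 < m) : univ.gcd (powerGens m B) = 1 :=
  gcd_eq_one_of_eq_add_one (i := 0) (j := Fin.succ ⟨0, hm⟩) <| by
    simp only [powerGens, Fin.cons_zero, Fin.cons_succ, pow_zero]

theorem minimalGens_powerGens (hm : 0 < m) (hB : 2 ≤ B) : MinimalGens (powerGens m B) :=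
  minimalGens_of_lt_two_mul (powerGens_injective hB) fun i j =>
    (powerGens_lt_two_mul_leastGen hm (by lia) i).trans_le
      (Nat.mul_le_mul_left 2 (leastGen_le_powerGens j))

theorem sum_mul_powerGens (z : Fin (m + 1) → ℕ) :
    ∑ j, z j * powerGens m B j
      = (∑ j, z j) * leastGen m B + ∑ i : Fin m, z i.succ * B ^ (i : ℕ) := by
  simp only [Fin.sum_univ_succ, powerGens, Fin.cons_zero, Fin.cons_succ, mul_add,
    sum_add_distrib, add_mul, sum_mul]
  ring

theorem sum_add_two_mul_mul_pow (u : Fin m → ℕ) (q : ℕ) :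
    ∑ i, (u i + 2 * q) * B ^ (i : ℕ) = ∑ i, u i * B ^ (i : ℕ) + q * leastGen m B := by
  simp only [add_mul, sum_add_distrib, ← mul_sum, leastGen]
  ring

/-- `IsTrade q z y`: the coefficient vector `y` arises from `z` by applying the relation
`(2m + 1) p = 2 ∑ (p + B ^ i)` between the generators `q` times, from left to right. -/
def IsTrade (q : ℕ) (z y : Fin (m + 1) → ℕ) : Prop :=
  z 0 = y 0 + (2 * m + 1) * q ∧ ∀ i : Fin m, y i.succ = z i.succ + 2 * q

theorem IsTrade.sum_eq_sum_add {q : ℕ} {z y : Fin (m + 1) → ℕ} (h : IsTrade q z y) :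
    ∑ j, z j = ∑ j, y j + q := by
  simp only [Fin.sum_univ_succ, h.1, h.2, sum_add_distrib, sum_const, card_univ,
    Fintype.card_fin, smul_eq_mul]
  ring

theorem IsTrade.sum_mul_powerGens_eq {q : ℕ} {z y : Fin (m + 1) → ℕ} (h : IsTrade q z y) :
    ∑ j, y j * powerGens m B j = ∑ j, z j * powerGens m B j := by
  simp only [sum_mul_powerGens, h.sum_eq_sum_add, h.2, sum_add_two_mul_mul_pow]
  ring

theorem exists_isTrade_of_sum_mul_powerGens_eq {z y : Fin (m + 1) → ℕ}
    (hz : ∑ i : Fin m, z i.succ * B ^ (i : ℕ) < leastGen m B) (hB : 3 * ∑ j, z j < B)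
    (h : ∑ j, y j * powerGens m B j = ∑ j, z j * powerGens m B j) :
    ∃ q, IsTrade q z y := by
  rw [sum_mul_powerGens, sum_mul_powerGens] at h
  -- As the remainder in `hz` is less than `p`, the other factorization has no larger length.
  have hle : ∑ j, y j ≤ ∑ j, z j := by
    by_contra! hlt
    have := Nat.mul_le_mul_right (leastGen m B) (Nat.succ_le_of_lt hlt)
    rw [Nat.succ_mul] at this
    lia
  obtain ⟨q, hq⟩ := Nat.exists_eq_add_of_le hle
  have hdigits : (fun i : Fin m => y i.succ) = fun i => z i.succ + 2 * q := by
    have coeff_le (u : Fin (m + 1) → ℕ) (j) : u j ≤ ∑ j, u j :=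
      single_le_sum_of_canonicallyOrdered (mem_univ j)
    refine eq_of_sum_mul_pow_eq (B := B) (fun i => ?_) (fun i => ?_) ?_
    · have := coeff_le y i.succ
      lia
    · have := coeff_le z i.succ
      lia
    · rw [sum_add_two_mul_mul_pow]
      rw [hq, add_mul] at h
      lia
  have hsucc : ∀ i : Fin m, y i.succ = z i.succ + 2 * q := congrFun hdigits
  refine ⟨q, ?_, hsucc⟩
  simp only [Fin.sum_univ_succ, hsucc, sum_add_distrib, sum_const, card_univ,
    Fintype.card_fin, smul_eq_mul] at hq
  linarith

/-- The factorization `(2m + 2) p + ∑ i ∈ T, (p + B ^ i)`, with `p = leastGen m B`: one copy of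
`p` is left after the relation `(2m + 1) p = 2 ∑ (p + B ^ i)` is applied once. -/
def shortFactorization (T : Finset (Fin m)) : Fin (m + 1) → ℕ :=
  Fin.cons (2 * m + 2) fun i => if i ∈ T then 1 else 0

/-- The factorization obtained from `shortFactorization T` by one application of the relation
`(2m + 1) p = 2 ∑ (p + B ^ i)`; all of its coefficients are positive. -/
def fullFactorization (T : Finset (Fin m)) : Fin (m + 1) → ℕ :=
  Fin.cons 1 fun i => (if i ∈ T then 1 else 0) + 2

theorem isTrade_one_shortFactorization (T : Finset (Fin m)) :
    IsTrade 1 (shortFactorization T) (fullFactorization T) :=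
  ⟨by simp only [shortFactorization, fullFactorization, Fin.cons_zero]; lia, fun _ => rfl⟩

theorem lzero_shortFactorization (T : Finset (Fin m)) : lzero (shortFactorization T) = #T + 1 := by
  rw [shortFactorization, lzero_cons_of_ne_zero (by lia)]
  simp [lzero]

theorem lzero_fullFactorization (T : Finset (Fin m)) : lzero (fullFactorization T) = m + 1 :=
  lzero_eq_of_forall_ne_zero fun j => by cases j using Fin.cases <;> simp [fullFactorization]

theorem sum_shortFactorization_le (T : Finset (Fin m)) :
    ∑ j, shortFactorization T j ≤ 3 * m + 2 := by
  have := card_finset_fin_le T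
  simp only [shortFactorization, Fin.sum_univ_succ, Fin.cons_zero, Fin.cons_succ, sum_boole,
    filter_univ_mem, Nat.cast_id]
  lia

theorem sum_shortFactorization_mul_pow_lt (hm : 0 < m) (hB : 0 < B) (T : Finset (Fin m)) :
    ∑ i : Fin m, shortFactorization T i.succ * B ^ (i : ℕ) < leastGen m B := by
  have hle : ∑ i : Fin m, shortFactorization T i.succ * B ^ (i : ℕ) ≤ ∑ i : Fin m, B ^ (i : ℕ) :=
    sum_le_sum fun i _ => by
      simp only [shortFactorization, Fin.cons_succ]
      split_ifs <;> simp
  have := leastGen_pos hm hB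
  unfold leastGen at *
  lia

theorem Zfac_powerGens_eq_pair (hm : 0 < m) (hB : 9 * (m + 1) ≤ B) (T : Finset (Fin m)) :
    Zfac (powerGens m B) (∑ j, shortFactorization T j * powerGens m B j)
      = {shortFactorization T, fullFactorization T} := by
  refine Set.Subset.antisymm (fun y hy => ?_) ?_
  · -- The bound on `B` is `3 * (3 * m + 2) < B` rounded up.
    have := sum_shortFactorization_le T
    obtain ⟨q, h0, hsucc⟩ := exists_isTrade_of_sum_mul_powerGens_eq
      (sum_shortFactorization_mul_pow_lt hm (by lia) T) (by lia) hy
    simp only [shortFactorization, Fin.cons_zero, Fin.cons_succ] at h0 hsucc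
    have hq : q < 2 := by
      by_contra! hq
      have := Nat.mul_le_mul_left (2 * m + 1) hq
      lia
    interval_cases q
    · exact Or.inl (funext (Fin.cases h0.symm hsucc))
    · exact Or.inr (funext (Fin.cases (by simp only [fullFactorization, Fin.cons_zero]; lia) hsucc))
  · rintro _ (rfl | rfl)
    · rfl
    · exact (isTrade_one_shortFactorization T).sum_mul_powerGens_eq

theorem sub_card_mem_DeltaZeroS_powerGens (hB : 9 * (m + 1) ≤ B) {T : Finset (Fin m)}
    (hT : #T < m) : m - #T ∈ DeltaZeroS (powerGens m B) := by
  refine Set.mem_iUnion.mpr ⟨∑ j, shortFactorization T j * powerGens m B j, ?_⟩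
  rw [DeltaZero, LzeroSet, Zfac_powerGens_eq_pair (by lia) hB, Set.image_pair,
    lzero_shortFactorization, lzero_fullFactorization, ← Nat.add_sub_add_right m 1]
  exact sub_mem_deltaSet_pair (by lia)

theorem DeltaZeroS_powerGens (hm : 0 < m) (hB : 9 * (m + 1) ≤ B) :
    DeltaZeroS (powerGens m B) = Set.Icc 1 m := by
  refine Set.Subset.antisymm (DeltaZeroS_subset_Icc fun j => ?_) fun d ⟨hd1, hdm⟩ => ?_
  · exact (leastGen_pos hm (by lia)).trans_le (leastGen_le_powerGens j)
  · obtain ⟨T, -, hT⟩ := exists_subset_card_eq (s := (univ : Finset (Fin m))) (n := m - d) (by simp)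
    have hmem := sub_card_mem_DeltaZeroS_powerGens hB (T := T) (by lia)
    rwa [hT, Nat.sub_sub_self hdm] at hmem

end PowerGens

/-- For every `k ≥ 2` there is a numerical semigroup `S` (given by minimal generators)
with `Δ₀(S) = {1, 2, …, k − 1}`. -/
theorem stmt_18 (k : ℕ) (hk : 2 ≤ k) :
    ∃ (n : ℕ) (a : Fin n → ℕ),
      Finset.univ.gcd a = 1 ∧ MinimalGens a ∧
      DeltaZeroS a = Set.Icc 1 (k - 1) := by
  obtain ⟨m, rfl⟩ := Nat.exists_eq_add_of_le' (Nat.one_le_of_lt hk)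
  have hm : 0 < m := by lia
  exact ⟨m + 1, powerGens m (9 * (m + 1)), gcd_powerGens hm,
    minimalGens_powerGens hm (by lia), DeltaZeroS_powerGens hm le_rfl⟩
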